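/- Assume n-wid(_R R) ≤ k. Then a right R-module M is (n,k)-weak cotorsion if and only if M is the direct sum of an injective right R-module and a reduced (n,k)-weak cotorsion right R-module. -/

import Mathlib

/-!
Common definitions for formalizing "(n,k)-weak cotorsion modules" over an arbitrary
(not necessarily commutative) ring `R`.  Left `R`-modules are objects of
`ModuleCat R`, right `R`-modules are objects of `ModuleCat Rᵐᵒᵖ`.

Since Mathlib does not provide `Tor` of a right module with a left module over a
noncommutative ring, we encode the vanishing of `Tor_i^R(N, M)` (for `N` a right
module and `M` a left module) by the equivalent condition
`Ext^i_{Rᵐᵒᵖ}(N, M⋆) = 0`, where `M⋆ = Hom_ℤ(M, ℚ/ℤ)` is the character module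
(a right module).  This is equivalent because `ℚ/ℤ` is an injective cogenerator:
`Ext^i_{Rᵐᵒᵖ}(N, M⋆) ≅ (Tor_i^R(N, M))⋆`, and an abelian group vanishes iff its
character group does.
-/

open CategoryTheory

universe u

noncomputable section

/-- The character group `Hom_ℤ(N, ℚ/ℤ)`. -/
def CharGroup (N : Type u) [AddCommGroup N] : Type u := N →+ AddCircle (1 : ℚ)

instance (N : Type u) [AddCommGroup N] : AddCommGroup (CharGroup N) :=
  inferInstanceAs (AddCommGroup (N →+ AddCircle (1 : ℚ)))

namespace CharGroup

variable {N : Type u} [AddCommGroup N]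

/-- View an element of the character group as an additive monoid hom. -/
def toHom (f : CharGroup N) : N →+ AddCircle (1 : ℚ) := f

/-- Build an element of the character group from an additive monoid hom. -/
def ofHom (f : N →+ AddCircle (1 : ℚ)) : CharGroup N := f

theorem hom_ext {f g : CharGroup N} (h : ∀ m, toHom f m = toHom g m) : f = g :=
  AddMonoidHom.ext h

end CharGroup

open CharGroup in
/-- Left module structure on the character group of a right module. -/
instance charGroupModuleLeft (R : Type u) [Ring R] (N : Type u) [AddCommGroup N]
    [Module Rᵐᵒᵖ N] : Module R (CharGroup N) where
  smul r f := ofHom ((toHom f).comp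
    (AddMonoidHom.mk' (fun m => MulOpposite.op r • m) (fun a b => smul_add _ a b)))
  one_smul f := hom_ext fun m => by
    show toHom f (MulOpposite.op (1 : R) • m) = toHom f m
    rw [MulOpposite.op_one, one_smul]
  mul_smul r s f := hom_ext fun m => by
    show toHom f (MulOpposite.op (r * s) • m)
      = toHom f (MulOpposite.op s • MulOpposite.op r • m)
    rw [MulOpposite.op_mul, mul_smul]
  smul_zero r := CharGroup.hom_ext fun m => rfl
  smul_add r f g := CharGroup.hom_ext fun m => rfl
  add_smul r s f := hom_ext fun m => by
    show toHom f (MulOpposite.op (r + s) • m)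
      = toHom f (MulOpposite.op r • m) + toHom f (MulOpposite.op s • m)
    rw [MulOpposite.op_add, add_smul, map_add]
  zero_smul f := hom_ext fun m => by
    show toHom f (MulOpposite.op (0 : R) • m) = 0
    rw [MulOpposite.op_zero, zero_smul, map_zero]

open CharGroup in
/-- Right module structure on the character group of a left module. -/
instance charGroupModuleRight (R : Type u) [Ring R] (N : Type u) [AddCommGroup N]
    [Module R N] : Module Rᵐᵒᵖ (CharGroup N) where
  smul r f := ofHom ((toHom f).comp
    (AddMonoidHom.mk' (fun m => r.unop • m) (fun a b => smul_add _ a b)))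
  one_smul f := hom_ext fun m => by
    show toHom f ((1 : Rᵐᵒᵖ).unop • m) = toHom f m
    rw [MulOpposite.unop_one, one_smul]
  mul_smul r s f := hom_ext fun m => by
    show toHom f ((r * s).unop • m) = toHom f (s.unop • r.unop • m)
    rw [MulOpposite.unop_mul, mul_smul]
  smul_zero r := CharGroup.hom_ext fun m => rfl
  smul_add r f g := CharGroup.hom_ext fun m => rfl
  add_smul r s f := hom_ext fun m => by
    show toHom f ((r + s).unop • m) = toHom f (r.unop • m) + toHom f (s.unop • m)
    rw [MulOpposite.unop_add, add_smul, map_add]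
  zero_smul f := hom_ext fun m => by
    show toHom f ((0 : Rᵐᵒᵖ).unop • m) = 0
    rw [MulOpposite.unop_zero, zero_smul, map_zero]

variable (R : Type u) [Ring R]

/-- `extVanish S i A B` says that `Ext^i_S(A, B) = 0`. -/
def extVanish (S : Type u) [Ring S] (i : ℕ) (A B : ModuleCat.{u} S) : Prop :=
  Subsingleton (((Ext ℤ (ModuleCat.{u} S) i).obj (Opposite.op A)).obj B)

/-- The character module of a right `R`-module, as a left `R`-module. -/
def charLeft (N : ModuleCat.{u} Rᵐᵒᵖ) : ModuleCat.{u} R :=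
  ModuleCat.of R (CharGroup N)

/-- The character module of a left `R`-module, as a right `R`-module. -/
def charRight (M : ModuleCat.{u} R) : ModuleCat.{u} Rᵐᵒᵖ :=
  ModuleCat.of Rᵐᵒᵖ (CharGroup M)

/-- `torVanish R i N M` encodes `Tor_i^R(N, M) = 0` for a right module `N` and a
left module `M`, via the character module duality
`Ext^i_R(M, N⋆) ≅ (Tor_i^R(N, M))⋆`. -/
def torVanish (i : ℕ) (N : ModuleCat.{u} Rᵐᵒᵖ) (M : ModuleCat.{u} R) : Prop :=
  extVanish R i M (charLeft R N)

/-- `K` is a special super finitely presented `S`-module (for the parameter `n`):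
`K` is the image of `F_n → F_{n-1}` in a projective resolution
`⋯ → F_{n+1} → F_n → ⋯ → F_0 → U → 0` of some module `U` in which `F_i` is finitely
generated projective for all `i ≥ n`.  (For `n = 0` the distinguished module is `U`
itself, matching `Ext^{n+1}(U, -) ≅ Ext^1(K_{n-1}, -)`.) -/
def IsSpecialSFP (S : Type u) [Ring S] (n : ℕ) (K : ModuleCat.{u} S) : Prop :=
  ∃ (U : ModuleCat.{u} S) (F : ℕ → ModuleCat.{u} S)
    (d : ∀ i, F (i + 1) →ₗ[S] F i) (π : F 0 →ₗ[S] U),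
      (∀ i, Module.Projective S (F i)) ∧
      (∀ i, n ≤ i → Module.Finite S (F i)) ∧
      Function.Surjective π ∧ Function.Exact (d 0) π ∧
      (∀ i, Function.Exact (d (i + 1)) (d i)) ∧
      (if n = 0 then Nonempty ((K : Type u) ≃ₗ[S] U)
       else Nonempty ((K : Type u) ≃ₗ[S] LinearMap.range (d (n - 1))))

/-- The `n`-weak injective dimension of a left `S`-module `M` is at most `k`. -/
def nwidLE (S : Type u) [Ring S] (n k : ℕ) (M : ModuleCat.{u} S) : Prop :=
  ∀ K : ModuleCat.{u} S, IsSpecialSFP S n K → extVanish S (k + 1) K M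

/-- The `n`-weak flat dimension of a right `R`-module `N` is at most `k`:
`Tor_{k+1}^R(N, K) = 0` for every special super finitely presented left module `K`. -/
def nwfdLE (n k : ℕ) (N : ModuleCat.{u} Rᵐᵒᵖ) : Prop :=
  ∀ K : ModuleCat.{u} R, IsSpecialSFP R n K → torVanish R (k + 1) N K

/-- A right `R`-module `M` is `(n,k)`-weak cotorsion if `Ext^1(N, M) = 0` for every
right module `N` of `n`-weak flat dimension at most `k`. -/
def IsNKWeakCotorsion (n k : ℕ) (M : ModuleCat.{u} Rᵐᵒᵖ) : Prop :=
  ∀ N : ModuleCat.{u} Rᵐᵒᵖ, nwfdLE R n k N → extVanish Rᵐᵒᵖ 1 N M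

/-- Projective dimension at most `k`, via Ext vanishing. -/
def pdLE (S : Type u) [Ring S] (k : ℕ) (K : ModuleCat.{u} S) : Prop :=
  ∀ M : ModuleCat.{u} S, extVanish S (k + 1) K M

/-- Injective dimension at most `k`, via Ext vanishing. -/
def idLE (S : Type u) [Ring S] (k : ℕ) (M : ModuleCat.{u} S) : Prop :=
  ∀ N : ModuleCat.{u} S, extVanish S (k + 1) N M

/-- Flat dimension of a right module at most `k`, via Tor vanishing. -/
def fdLE (k : ℕ) (N : ModuleCat.{u} Rᵐᵒᵖ) : Prop :=
  ∀ A : ModuleCat.{u} R, torVanish R (k + 1) N A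

/-- `l.n.sp.gldim(R) ≤ k` : every special super finitely presented left module has
projective dimension at most `k`. -/
def lnspGldimLE (n k : ℕ) : Prop :=
  ∀ K : ModuleCat.{u} R, IsSpecialSFP R n K → pdLE R k K

/-- `w.gl.dim(R) ≤ k`. -/
def wGldimLE (k : ℕ) : Prop :=
  ∀ N : ModuleCat.{u} Rᵐᵒᵖ, fdLE R k N

/-- A right `R`-module `M` is `k`-cotorsion if `Ext^1(F, M) = 0` for every right
module `F` of flat dimension at most `k`. -/
def IsKCotorsion (k : ℕ) (M : ModuleCat.{u} Rᵐᵒᵖ) : Prop :=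
  ∀ F : ModuleCat.{u} Rᵐᵒᵖ, fdLE R k F → extVanish Rᵐᵒᵖ 1 F M

/-- `φ : E → D` is a `𝒞`-precover of `D`. -/
def IsPrecover (S : Type u) [Ring S] (𝒞 : ModuleCat.{u} S → Prop)
    (E D : ModuleCat.{u} S) (φ : E →ₗ[S] D) : Prop :=
  𝒞 E ∧ ∀ F : ModuleCat.{u} S, 𝒞 F → ∀ g : F →ₗ[S] D, ∃ h : F →ₗ[S] E, φ ∘ₗ h = g

/-- `φ : E → D` is a `𝒞`-cover of `D`. -/
def IsCover (S : Type u) [Ring S] (𝒞 : ModuleCat.{u} S → Prop)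
    (E D : ModuleCat.{u} S) (φ : E →ₗ[S] D) : Prop :=
  IsPrecover S 𝒞 E D φ ∧ ∀ g : E →ₗ[S] E, φ ∘ₗ g = φ → Function.Bijective g

/-- `f : X → F` is a `𝒞`-preenvelope of `X`. -/
def IsPreenvelope (S : Type u) [Ring S] (𝒞 : ModuleCat.{u} S → Prop)
    (X F : ModuleCat.{u} S) (f : X →ₗ[S] F) : Prop :=
  𝒞 F ∧ ∀ F' : ModuleCat.{u} S, 𝒞 F' → ∀ g : X →ₗ[S] F', ∃ h : F →ₗ[S] F', h ∘ₗ f = g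

/-- A module is reduced if it has no nonzero injective submodules. -/
def IsReducedModule (S : Type u) [Ring S] (M : ModuleCat.{u} S) : Prop :=
  ∀ N : Submodule S M, Module.Injective S N → N = ⊥

/-- `D` is an `m`-th cosyzygy of `M`: there is an exact sequence
`0 → M → E^0 → ⋯ → E^{m-1} → D → 0` with each `E^i` injective. -/
def IsCosyzygy (S : Type u) [Ring S] : ℕ → ModuleCat.{u} S → ModuleCat.{u} S → Prop
  | 0, M, D => Nonempty ((M : Type u) ≃ₗ[S] D)
  | m + 1, M, D => ∃ (C E : ModuleCat.{u} S), IsCosyzygy S m M C ∧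
      Module.Injective S E ∧
      ∃ (ι : C →ₗ[S] E) (p : E →ₗ[S] D),
        Function.Injective ι ∧ Function.Surjective p ∧ Function.Exact ι p


/-- A left `R`-module `F` is flat: `Tor_1(A, F) = 0` for every right module `A`
(encoded via character duality, as above). -/
def IsFlatModule (R : Type u) [Ring R] (F : ModuleCat.{u} R) : Prop :=
  ∀ A : ModuleCat.{u} Rᵐᵒᵖ, torVanish R 1 A F

end

open CategoryTheory CategoryTheory.Limits

theorem extVanish_iff_res {S : Type u} [Ring S] {A : ModuleCat.{u} S} (P : ProjectiveResolution A)
    (i : ℕ) (X : ModuleCat.{u} S) :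
    extVanish S (i+1) A X ↔ ∀ f : P.complex.X (i+1) ⟶ X, P.complex.d (i+2) (i+1) ≫ f = 0 →
      ∃ h : P.complex.X i ⟶ X, P.complex.d (i+1) i ≫ h = f := by
  unfold extVanish
  rw [← ModuleCat.isZero_iff_subsingleton, (P.isoExt (i+1) X).isZero_iff,
    ← HomologicalComplex.exactAt_iff_isZero_homology,
    HomologicalComplex.exactAt_iff' _ i (i+1) (i+2) (by simp) (by simp),
    ShortComplex.moduleCat_exact_iff]
  constructor
  · intro H f hf
    exact H f hf
  · intro H f hf
    exact H f hf

theorem exists_res {S : Type u} [Ring S] (A : ModuleCat.{u} S) (F : ℕ → ModuleCat.{u} S)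
    (d : ∀ i, F (i + 1) →ₗ[S] F i) (π : F 0 →ₗ[S] A)
    (hp : ∀ i, Module.Projective S (F i)) (hs : Function.Surjective π)
    (h0 : Function.Exact (d 0) π) (hd : ∀ i, Function.Exact (d (i + 1)) (d i))
    (i : ℕ) (X : ModuleCat.{u} S) :
    extVanish S (i+1) A X ↔ ∀ f : F (i+1) →ₗ[S] X, f ∘ₗ d (i+1) = 0 →
      ∃ h : F i →ₗ[S] X, h ∘ₗ d i = f := by
  let C : ChainComplex (ModuleCat.{u} S) ℕ := ChainComplex.of F (fun i => ModuleCat.ofHom (d i))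
    (fun i => by
      ext x
      exact (hd i).apply_apply_eq_zero x)
  have hC : ∀ j, C.d (j+1) j = ModuleCat.ofHom (d j) := fun j => 
    ChainComplex.of_d F (fun i => ModuleCat.ofHom (d i)) j
  let P : ProjectiveResolution A :=
    { complex := C
      projective := fun j => by
        change Projective (F j)
        have := hp j
        exact (IsProjective.iff_projective (R := S) (F j)).1 this
      π := (ChainComplex.toSingle₀Equiv C A).symm ⟨ModuleCat.ofHom π, by
          rw [hC]
          ext x
          exact h0.apply_apply_eq_zero x⟩
      quasiIso := ⟨fun j => by
        cases j with
        | zero =>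
          rw [ChainComplex.quasiIsoAt₀_iff, ShortComplex.quasiIso_iff_of_zeros']
          · have hex : (ShortComplex.mk (ModuleCat.ofHom (d 0)) (ModuleCat.ofHom π)
                (by ext x; exact h0.apply_apply_eq_zero x)).Exact :=
              (ShortComplex.moduleCat_exact_iff _).2 fun x hx => (h0 x).1 hx
            have hepi : Epi (ModuleCat.ofHom π) := (ModuleCat.epi_iff_surjective _).2 hs
            refine (ShortComplex.exact_and_epi_g_iff_of_iso ?_).2 ⟨hex, hepi⟩
            exact ShortComplex.isoMk (Iso.refl _) (Iso.refl _) (Iso.refl _)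
              (by simp [hC]; exact (Category.id_comp _).trans (Category.comp_id _).symm)
              (by simp; exact (Category.id_comp _).trans (Category.comp_id _).symm)
          all_goals rfl
        | succ j =>
          rw [quasiIsoAt_iff_exactAt']
          · rw [HomologicalComplex.exactAt_iff' _ (j + 1 + 1) (j + 1) j (by simp) (by simp)]
            rw [ShortComplex.moduleCat_exact_iff]
            intro x hx
            have hx' : C.d (j+1) j x = 0 := hx
            rw [hC] at hx'
            obtain ⟨y, hy⟩ := (hd j x).1 hx'
            refine ⟨y, ?_⟩
            change C.d (j+2) (j+1) y = x
            rw [hC]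
            exact hy
          · apply ChainComplex.exactAt_succ_single_obj⟩ }
  rw [extVanish_iff_res P]
  change (∀ f : F (i+1) ⟶ X, C.d (i+2) (i+1) ≫ f = 0 →
      ∃ h : F i ⟶ X, C.d (i+1) i ≫ h = f) ↔ _
  rw [hC, hC]
  constructor
  · intro H f hf
    obtain ⟨h, hh⟩ := H (ModuleCat.ofHom f) (by ext x; exact LinearMap.congr_fun hf x)
    exact ⟨h.hom, by ext x; exact LinearMap.congr_fun (congrArg ModuleCat.Hom.hom hh) x⟩
  · intro H f hf
    obtain ⟨h, hh⟩ := H f.hom (by ext x; exact LinearMap.congr_fun (congrArg ModuleCat.Hom.hom hf) x)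
    exact ⟨ModuleCat.ofHom h, by ext x; exact LinearMap.congr_fun hh x⟩

theorem sfp_res {R : Type u} [Ring R] {n : ℕ} {K : ModuleCat.{u} R} (hK : IsSpecialSFP R n K) :
    ∃ (F : ℕ → ModuleCat.{u} R) (d : ∀ i, F (i + 1) →ₗ[R] F i) (π : F 0 →ₗ[R] K),
      (∀ i, Module.Projective R (F i)) ∧ (∀ i, Module.Finite R (F i)) ∧
      Function.Surjective π ∧ Function.Exact (d 0) π ∧
      (∀ i, Function.Exact (d (i + 1)) (d i)) := by
  obtain ⟨U, F, d, π, hp, hf, hs, h0, hd, hK⟩ := hK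
  cases n with
  | zero =>
    obtain ⟨e⟩ := (if_pos rfl).mp hK
    refine ⟨F, d, e.symm.toLinearMap ∘ₗ π, hp, fun i => hf i (Nat.zero_le _),
      e.symm.surjective.comp hs, ?_, hd⟩
    intro x
    simpa using h0 x
  | succ m =>
    obtain ⟨e⟩ := (if_neg (Nat.succ_ne_zero m)).mp hK
    refine ⟨fun i => F (m + 1 + i), fun i => d (m + 1 + i),
      e.symm.toLinearMap ∘ₗ (d m).rangeRestrict, fun i => hp _, fun i => hf _ (Nat.le_add_right _ _),
      e.symm.surjective.comp (d m).surjective_rangeRestrict, ?_, fun i => hd _⟩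
    intro x
    have := hd m x
    simp only [LinearMap.coe_comp, Function.comp_apply, LinearEquiv.coe_coe,
      EmbeddingLike.map_eq_zero_iff]
    rw [← Subtype.coe_inj]
    exact this

theorem inj_ext {S : Type u} [Ring S] {Q A B : Type u} [AddCommGroup Q] [Module S Q]
    [AddCommGroup A] [Module S A] [AddCommGroup B] [Module S B] (hQ : Module.Injective S Q)
    (j : A →ₗ[S] B) (f : A →ₗ[S] Q) (hk : ∀ a, j a = 0 → f a = 0) :
    ∃ h : B →ₗ[S] Q, ∀ a, h (j a) = f a := by
  let f' : (A ⧸ LinearMap.ker j) →ₗ[S] Q := (LinearMap.ker j).liftQ f (fun a ha => hk a ha)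
  let j' : (A ⧸ LinearMap.ker j) →ₗ[S] B := (LinearMap.ker j).liftQ j le_rfl
  have hj' : Function.Injective j' := by
    rw [← LinearMap.ker_eq_bot]
    exact Submodule.ker_liftQ_eq_bot _ _ _ le_rfl
  obtain ⟨h, hh⟩ := hQ.out j' hj' f'
  exact ⟨h, fun a => hh (Submodule.Quotient.mk a)⟩

theorem inj_retract {S : Type u} [Ring S] {Q E : Type u} [AddCommGroup Q] [Module S Q]
    [AddCommGroup E] [Module S E] (hE : Module.Injective S E)
    (s : Q →ₗ[S] E) (p : E →ₗ[S] Q) (h : ∀ x, p (s x) = x) : Module.Injective S Q := by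
  refine ⟨fun X Y _ _ _ _ f hf g => ?_⟩
  obtain ⟨t, ht⟩ := hE.out f hf (s ∘ₗ g)
  exact ⟨p ∘ₗ t, fun x => by simp [ht, h]⟩

theorem inj_quot {S : Type u} [Ring S] {E : Type u}
    [AddCommGroup E] [Module S E] (hE : Module.Injective S E) (I : Submodule S E)
    (hI : Module.Injective S I) : Module.Injective S (E ⧸ I) := by
  obtain ⟨r, hr⟩ := hI.out I.subtype I.injective_subtype LinearMap.id
  refine inj_retract hE (I.liftQ (LinearMap.id - I.subtype ∘ₗ r) ?_) I.mkQ ?_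
  · intro x hx
    have := hr ⟨x, hx⟩
    simp only [Submodule.subtype_apply, LinearMap.id_apply] at this
    simp [this]
  · intro x
    obtain ⟨x, rfl⟩ := I.mkQ_surjective x
    simp

theorem dual_basis {R : Type u} [Ring R] (P : Type u) [AddCommGroup P] [Module R P]
    [Module.Finite R P] [Module.Projective R P] :
    ∃ (m : ℕ) (p : Fin m → P) (φ : Fin m → (P →ₗ[R] R)), ∀ x, ∑ i, φ i x • p i = x := by
  obtain ⟨m, f, hf⟩ := Module.Finite.exists_fin' R P
  obtain ⟨s, hs⟩ := Module.projective_lifting_property f LinearMap.id hf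
  refine ⟨m, fun i => f (Pi.single i 1), fun i => LinearMap.proj i ∘ₗ s, fun x => ?_⟩
  have h2 : f (s x) = x := LinearMap.congr_fun hs x
  conv_rhs => rw [← h2, ← Finset.univ_sum_single (s x)]
  rw [map_sum]
  refine Finset.sum_congr rfl fun i _ => ?_
  rw [← map_smul]
  congr 1
  ext j
  by_cases hj : j = i
  · subst hj; simp
  · simp [hj]

theorem dual_expand {R : Type u} [Ring R] {P : Type u} [AddCommGroup P] [Module R P]
    {m : ℕ} {p : Fin m → P} {φ : Fin m → (P →ₗ[R] R)} (h : ∀ x, ∑ i, φ i x • p i = x)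
    (ψ : P →ₗ[R] R) : ψ = ∑ i, MulOpposite.op (ψ (p i)) • φ i := by
  ext x
  conv_lhs => rw [← h x]
  simp

theorem char_ext {A B : Type u} [AddCommGroup A] [AddCommGroup B] (ρ : A →+ B)
    (Φ : A →+ AddCircle (1 : ℚ)) (hk : ∀ a, ρ a = 0 → Φ a = 0) :
    ∃ Ψ : B →+ AddCircle (1 : ℚ), ∀ a, Ψ (ρ a) = Φ a := by
  have hB : Module.Baer ℤ (AddCircle (1 : ℚ)) := Module.Baer.of_divisible _
  obtain ⟨h, hh⟩ := hB.extension_property_addMonoidHom (QuotientAddGroup.kerLift ρ)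
    (QuotientAddGroup.kerLift_injective ρ) (QuotientAddGroup.lift ρ.ker Φ (fun a ha => hk a ha))
  refine ⟨h, fun a => ?_⟩
  exact DFunLike.congr_fun hh (QuotientAddGroup.mk a)

open CharGroup in
theorem duality {R : Type u} [Ring R] {P0 P1 P2 N : Type u} [AddCommGroup P0] [Module R P0]
    [AddCommGroup P1] [Module R P1] [AddCommGroup P2] [Module R P2]
    [AddCommGroup N] [Module Rᵐᵒᵖ N]
    [Module.Finite R P1] [Module.Projective R P1]
    [Module.Finite R P2] [Module.Projective R P2]
    (d1 : P1 →ₗ[R] P0) (d2 : P2 →ₗ[R] P1)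
    (hN : ∀ g : (P1 →ₗ[R] R) →ₗ[Rᵐᵒᵖ] N, (∀ φ : P0 →ₗ[R] R, g (φ ∘ₗ d1) = 0) →
      ∃ g2 : (P2 →ₗ[R] R) →ₗ[Rᵐᵒᵖ] N, ∀ φ : P1 →ₗ[R] R, g2 (φ ∘ₗ d2) = g φ)
    (f : P1 →ₗ[R] CharGroup N) (hf : f ∘ₗ d2 = 0) :
    ∃ h : P0 →ₗ[R] CharGroup N, h ∘ₗ d1 = f := by
  obtain ⟨m, p, φ, hp⟩ := dual_basis (R := R) P1
  obtain ⟨l, q, θ, hq⟩ := dual_basis (R := R) P2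
  have hsmul : ∀ (r : R) (c : CharGroup N) (x : N),
    toHom (r • c) x = toHom c (MulOpposite.op r • x) := fun _ _ _ => rfl
  have hadd : ∀ (c c' : CharGroup N) (x : N),
    toHom (c + c') x = toHom c x + toHom c' x := fun _ _ _ => rfl
  let tH : N → CharGroup N →+ AddCircle (1 : ℚ) := fun x =>
    AddMonoidHom.mk' (fun c => toHom c x) (fun c c' => hadd c c' x)
  have htH : ∀ x c, tH x c = toHom c x := fun _ _ => rfl
  let D1 : (P0 →ₗ[R] R) →ₗ[Rᵐᵒᵖ] (P1 →ₗ[R] R) :=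
    { toFun := fun φ => φ ∘ₗ d1, map_add' := fun _ _ => rfl, map_smul' := fun _ _ => rfl }
  let Φ : ((P1 →ₗ[R] R) →ₗ[Rᵐᵒᵖ] N) →+ AddCircle (1 : ℚ) :=
    ∑ i, (toHom (f (p i))).comp (AddMonoidHom.mk' (fun g => g (φ i)) (fun _ _ => rfl))
  have hΦ : ∀ g, Φ g = ∑ i, toHom (f (p i)) (g (φ i)) := fun g => by
    simp [Φ]
  let ρ : ((P1 →ₗ[R] R) →ₗ[Rᵐᵒᵖ] N) →+ ((P0 →ₗ[R] R) →ₗ[Rᵐᵒᵖ] N) :=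
    AddMonoidHom.mk' (fun g => g ∘ₗ D1) (fun _ _ => rfl)
  obtain ⟨Ψ, hΨ⟩ := char_ext ρ Φ (by
    intro g hg
    obtain ⟨g2, hg2⟩ := hN g (fun φ => LinearMap.congr_fun hg φ)
    rw [hΦ]
    have h1 : ∀ i, toHom (f (p i)) (g (φ i)) =
        ∑ j, toHom (φ i (d2 (q j)) • f (p i)) (g2 (θ j)) := by
      intro i
      rw [← hg2, dual_expand hq (φ i ∘ₗ d2), map_sum, map_sum]
      refine Finset.sum_congr rfl fun j _ => ?_
      rw [map_smul, hsmul]; rfl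
    simp_rw [h1]
    rw [Finset.sum_comm]
    refine Finset.sum_eq_zero fun j _ => ?_
    simp_rw [← htH, ← map_smul]
    rw [← map_sum, ← map_sum, hp]
    have : f (d2 (q j)) = 0 := LinearMap.congr_fun hf (q j)
    rw [this, map_zero])
  let ev : P0 → N → ((P0 →ₗ[R] R) →ₗ[Rᵐᵒᵖ] N) := fun y x =>
    { toFun := fun φ => MulOpposite.op (φ y) • x
      map_add' := fun a b => by simp [add_smul]
      map_smul' := fun r a => by
        simp [mul_smul] }
  have hev : ∀ y x φ, ev y x φ = MulOpposite.op (φ y) • x := fun _ _ _ => rfl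
  let h : P0 →ₗ[R] CharGroup N :=
    { toFun := fun y => ofHom (AddMonoidHom.mk' (fun x => Ψ (ev y x)) (fun a b => by
        rw [← map_add]; congr 1; ext φ; simp [hev]))
      map_add' := fun y z => hom_ext fun x => by
        change Ψ (ev (y + z) x) = Ψ (ev y x) + Ψ (ev z x)
        rw [← map_add]; congr 1; ext φ; simp [hev, add_smul]
      map_smul' := fun r y => hom_ext fun x => by
        change Ψ (ev (r • y) x) = Ψ (ev y (MulOpposite.op r • x))
        congr 1; ext φ; simp [hev, mul_smul] }
  refine ⟨h, LinearMap.ext fun y => hom_ext fun x => ?_⟩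
  change Ψ (ev (d1 y) x) = toHom (f y) x
  let ev1 : ((P1 →ₗ[R] R) →ₗ[Rᵐᵒᵖ] N) :=
    { toFun := fun φ => MulOpposite.op (φ y) • x
      map_add' := fun a b => by simp [add_smul]
      map_smul' := fun r a => by
        simp [mul_smul] }
  have : ev (d1 y) x = ρ ev1 := rfl
  rw [this, hΨ, hΦ]
  have h2 : ∀ i, toHom (f (p i)) (ev1 (φ i)) = tH x (f (φ i y • p i)) := by
    intro i
    rw [map_smul]; rfl
  simp_rw [h2]
  rw [← map_sum, ← map_sum, hp]; rfl

theorem nwfd_quot {R : Type u} [Ring R] {n k : ℕ} (h : nwidLE R n k (ModuleCat.of R R))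
    {E : Type u} [AddCommGroup E] [Module Rᵐᵒᵖ E] (hE : Module.Injective Rᵐᵒᵖ E)
    (U : Submodule Rᵐᵒᵖ E)
    (hU : ∀ (m : ℕ) (t : Fin m → E), (∀ i, t i ∈ U) →
      ∃ I : Submodule Rᵐᵒᵖ E, Module.Injective Rᵐᵒᵖ I ∧ I ≤ U ∧ ∀ i, t i ∈ I) :
    nwfdLE R n k (ModuleCat.of Rᵐᵒᵖ (E ⧸ U)) := by
  intro K hK
  have hR := h K hK
  obtain ⟨F, d, π, hp, hf, hs, h0, hd⟩ := sfp_res hK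
  unfold torVanish
  rw [exists_res K F d π hp hs h0 hd] at hR ⊢
  have := hp k; have := hp (k+1); have := hp (k+2)
  have := hf k; have := hf (k+1); have := hf (k+2)
  intro f hf
  refine duality (N := E ⧸ U) (d k) (d (k+1)) ?_ f hf
  intro g hg
  obtain ⟨m, p, φ, hpφ⟩ := dual_basis (R := R) (F k)
  obtain ⟨l, q, θ, hqθ⟩ := dual_basis (R := R) (F (k+1))
  choose e he using fun i => U.mkQ_surjective (g (θ i))
  let g1 : (F (k+1) →ₗ[R] R) →ₗ[Rᵐᵒᵖ] E :=
    { toFun := fun ψ => ∑ i, MulOpposite.op (ψ (q i)) • e i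
      map_add' := fun a b => by simp [add_smul, Finset.sum_add_distrib]
      map_smul' := fun r a => by simp [mul_smul, Finset.smul_sum] }
  have hg1 : ∀ ψ, U.mkQ (g1 ψ) = g ψ := by
    intro ψ
    conv_rhs => rw [dual_expand hqθ ψ]
    simp only [g1, LinearMap.coe_mk, AddHom.coe_mk, map_sum, map_smul, he]
  obtain ⟨I, hI, hIU, hIm⟩ := hU m (fun j => g1 (φ j ∘ₗ d k)) (fun j => by
    rw [← Submodule.Quotient.mk_eq_zero]
    exact (hg1 _).trans (hg _))
  have hkill : ∀ ψ : F k →ₗ[R] R, g1 (ψ ∘ₗ d k) ∈ I := by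
    intro ψ
    have : ψ ∘ₗ d k = ∑ i, MulOpposite.op (ψ (p i)) • (φ i ∘ₗ d k) := by
      conv_lhs => rw [dual_expand hpφ ψ]
      ext x
      simp
    rw [this, map_sum]
    refine Submodule.sum_mem _ fun i _ => ?_
    rw [map_smul]
    exact I.smul_mem _ (hIm i)
  let D2 : (F (k+1) →ₗ[R] R) →ₗ[Rᵐᵒᵖ] (F (k+2) →ₗ[R] R) :=
    { toFun := fun φ => φ ∘ₗ d (k+1), map_add' := fun _ _ => rfl, map_smul' := fun _ _ => rfl }
  obtain ⟨g2, hg2⟩ := inj_ext (inj_quot hE I hI) D2 (I.mkQ ∘ₗ g1) (by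
    intro ψ hψ
    obtain ⟨χ, hχ⟩ := hR ψ hψ
    rw [LinearMap.comp_apply, ← hχ]
    exact (Submodule.Quotient.mk_eq_zero I).2 (hkill χ))
  refine ⟨Submodule.factor hIU ∘ₗ g2, fun ψ => ?_⟩
  have := hg2 ψ
  change Submodule.factor hIU (g2 (D2 ψ)) = _
  rw [this, ← hg1]
  rfl

theorem ext_hom {S : Type u} [Ring S] {E : Type u} [AddCommGroup E] [Module S E]
    (U : Submodule S E) (M : ModuleCat.{u} S) (hv : extVanish S 1 (ModuleCat.of S (E ⧸ U)) M)
    (f : U →ₗ[S] M) : ∃ g : E →ₗ[S] M, ∀ u : U, g u = f u := by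
  let P := ProjectiveResolution.of (ModuleCat.of S (E ⧸ U))
  rw [extVanish_iff_res P] at hv
  let π : P.complex.X 0 →ₗ[S] (E ⧸ U) := (P.π.f 0).hom
  have hπ : Function.Surjective π := (ModuleCat.epi_iff_surjective (P.π.f 0)).1 inferInstance
  have hex := (ShortComplex.moduleCat_exact_iff _).1 P.exact₀
  have hP : Module.Projective S (P.complex.X 0) :=
    (IsProjective.iff_projective (R := S) (P.complex.X 0)).2 (P.projective 0)
  obtain ⟨α, hα⟩ := Module.projective_lifting_property U.mkQ π U.mkQ_surjective
  have hα' : ∀ x, U.mkQ (α x) = π x := fun x => LinearMap.congr_fun hα x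
  let d1 : P.complex.X 1 →ₗ[S] P.complex.X 0 := (P.complex.d 1 0).hom
  have hπd : ∀ x, π (d1 x) = 0 := fun x =>
    LinearMap.congr_fun (congrArg ModuleCat.Hom.hom P.complex_d_comp_π_f_zero) x
  let β : P.complex.X 1 →ₗ[S] U := (α ∘ₗ d1).codRestrict U (fun x => by
    rw [← Submodule.Quotient.mk_eq_zero]
    exact (hα' _).trans (hπd x))
  have hdd : ∀ x, d1 ((P.complex.d 2 1).hom x) = 0 := fun x =>
    LinearMap.congr_fun (congrArg ModuleCat.Hom.hom (P.complex.d_comp_d 2 1 0)) x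
  obtain ⟨h, hh⟩ := hv (ModuleCat.ofHom (f ∘ₗ β)) (by
    ext x
    change f (β ((P.complex.d 2 1).hom x)) = 0
    have : β ((P.complex.d 2 1).hom x) = 0 := by
      apply Subtype.ext
      change α (d1 ((P.complex.d 2 1).hom x)) = 0
      rw [hdd, map_zero]
    rw [this, map_zero])
  have hh' : ∀ x, h.hom (d1 x) = f (β x) := fun x =>
    LinearMap.congr_fun (congrArg ModuleCat.Hom.hom hh) x
  let j : (U × P.complex.X 0) →ₗ[S] E := U.subtype.coprod α
  let F : (U × P.complex.X 0) →ₗ[S] M := f.coprod h.hom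
  have hj : Function.Surjective j := by
    intro e
    obtain ⟨x, hx⟩ := hπ (U.mkQ e)
    refine ⟨(⟨e - α x, ?_⟩, x), by simp [j]⟩
    rw [← Submodule.Quotient.mk_eq_zero]
    change U.mkQ (e - α x) = 0
    rw [map_sub, hα', hx, sub_self]
  have hker : LinearMap.ker j ≤ LinearMap.ker F := by
    rintro ⟨a, x⟩ hax
    have h1 : (a : E) + α x = 0 := by simpa [j] using hax
    have h2 : π x = 0 := by
      rw [← hα', eq_neg_of_add_eq_zero_right h1, map_neg, neg_eq_zero]
      exact (Submodule.Quotient.mk_eq_zero U).2 a.2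
    obtain ⟨y, hy⟩ := hex x h2
    have hy' : d1 y = x := hy
    have h3 : a = - β y := by
      apply Subtype.ext
      change (a : E) = - α (d1 y)
      rw [hy']
      exact eq_neg_of_add_eq_zero_left h1
    change f a + h.hom x = 0
    rw [h3, ← hy', hh', map_neg, neg_add_cancel]
  let g : E →ₗ[S] M := (LinearMap.ker j).liftQ F hker ∘ₗ
    (j.quotKerEquivOfSurjective hj).symm.toLinearMap
  refine ⟨g, fun a => ?_⟩
  have h4 : (j.quotKerEquivOfSurjective hj).symm (a : E) = Submodule.Quotient.mk (a, 0) := by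
    rw [LinearEquiv.symm_apply_eq]
    simp [j]
  change (LinearMap.ker j).liftQ F hker ((j.quotKerEquivOfSurjective hj).symm (a : E)) = f a
  rw [h4]
  simp [F]

theorem ext_retract {S : Type u} [Ring S] (i : ℕ) {A M N : ModuleCat.{u} S}
    (hv : extVanish S (i+1) A M) (s : N →ₗ[S] M) (p : M →ₗ[S] N) (h : ∀ x, p (s x) = x) :
    extVanish S (i+1) A N := by
  let P := ProjectiveResolution.of A
  rw [extVanish_iff_res P] at hv ⊢
  intro f hf
  obtain ⟨t, ht⟩ := hv (f ≫ ModuleCat.ofHom s) (by rw [← Category.assoc, hf, Limits.zero_comp])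
  refine ⟨t ≫ ModuleCat.ofHom p, ?_⟩
  rw [← Category.assoc, ht]
  ext x
  exact h _

theorem ext_prod {S : Type u} [Ring S] (i : ℕ) {A M X Y : ModuleCat.{u} S}
    (hX : extVanish S (i+1) A X) (hY : extVanish S (i+1) A Y)
    (e : (M : Type u) ≃ₗ[S] (X × Y)) :
    extVanish S (i+1) A M := by
  let P := ProjectiveResolution.of A
  rw [extVanish_iff_res P] at hX hY ⊢
  intro f hf
  obtain ⟨t, ht⟩ := hX (f ≫ ModuleCat.ofHom (LinearMap.fst S X Y ∘ₗ e.toLinearMap))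
    (by rw [← Category.assoc, hf, Limits.zero_comp])
  obtain ⟨t', ht'⟩ := hY (f ≫ ModuleCat.ofHom (LinearMap.snd S X Y ∘ₗ e.toLinearMap))
    (by rw [← Category.assoc, hf, Limits.zero_comp])
  refine ⟨ModuleCat.ofHom (e.symm.toLinearMap ∘ₗ t.hom.prod t'.hom), ?_⟩
  ext x
  have h1 := LinearMap.congr_fun (congrArg ModuleCat.Hom.hom ht) x
  have h2 := LinearMap.congr_fun (congrArg ModuleCat.Hom.hom ht') x
  apply e.injective
  change e (e.symm (_, _)) = _
  rw [e.apply_symm_apply]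
  exact Prod.ext h1 h2

theorem ext_inj {S : Type u} [Ring S] (i : ℕ) {A M : ModuleCat.{u} S}
    (hM : Module.Injective S M) : extVanish S (i+1) A M := by
  let P := ProjectiveResolution.of A
  rw [extVanish_iff_res P]
  intro f hf
  have hex := (ShortComplex.moduleCat_exact_iff _).1 (P.exact_succ i)
  obtain ⟨g, hg⟩ := inj_ext hM (P.complex.d (i+1) i).hom f.hom (by
    intro a ha
    obtain ⟨y, hy⟩ := hex a ha
    have hy' : (P.complex.d (i+2) (i+1)).hom y = a := hy
    rw [← hy']
    exact LinearMap.congr_fun (congrArg ModuleCat.Hom.hom hf) y)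
  exact ⟨ModuleCat.ofHom g, by ext x; exact hg x⟩

theorem exists_max_disj {S : Type u} [Ring S] {E : Type u} [AddCommGroup E] [Module S E]
    (A B : Submodule S E) (h : Disjoint A B) :
    ∃ W, A ≤ W ∧ Maximal (fun W => Disjoint W B) W := by
  obtain ⟨W, hW, hm⟩ := zorn_le_nonempty₀ {W : Submodule S E | Disjoint W B} (by
    intro c hc hch y hy
    refine ⟨sSup c, ?_, fun z hz => le_sSup hz⟩
    rw [Set.mem_ofPred_eq, Submodule.disjoint_def]
    intro x hx hxB
    obtain ⟨w, hw, hxw⟩ := (Submodule.mem_sSup_of_directed ⟨y, hy⟩ hch.directedOn).1 hx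
    exact (Submodule.disjoint_def.1 (hc hw)) x hxw hxB) A h
  exact ⟨W, hW, hm⟩

theorem exists_hull {S : Type u} [Ring S] {E : Type u} [AddCommGroup E] [Module S E]
    (hE : Module.Injective S E) (U : Submodule S E) :
    ∃ V : Submodule S E, U ≤ V ∧ Module.Injective S V ∧
      ∀ x ∈ V, (Submodule.span S {x}) ⊓ U = ⊥ → x = 0 := by
  obtain ⟨W, -, hW⟩ := exists_max_disj ⊥ U disjoint_bot_left
  obtain ⟨V, hUV, hV⟩ := exists_max_disj U W hW.prop.symm
  have hVW := hV.prop
  -- V essential mod W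
  have hess : ∀ X : Submodule S E, W ≤ X → X ⊓ V ≤ W → X ≤ W := by
    intro X hWX hX
    refine hW.le_of_ge ?_ hWX
    rw [Submodule.disjoint_def]
    intro x hx hxU
    exact (Submodule.disjoint_def.1 hVW) x (hUV hxU) (hX ⟨hx, hUV hxU⟩)
  obtain ⟨t, ht⟩ := inj_ext hE (W.mkQ ∘ₗ V.subtype) V.subtype (by
    intro a ha
    exact (Submodule.disjoint_def.1 hVW) a a.2 ((Submodule.Quotient.mk_eq_zero W).1 ha))
  let τ : E →ₗ[S] E := t ∘ₗ W.mkQ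
  have hτ : ∀ v ∈ V, τ v = v := fun v hv => ht ⟨v, hv⟩
  have hτW : ∀ w ∈ W, τ w = 0 := fun w hw => by
    simp only [τ, LinearMap.comp_apply, Submodule.mkQ_apply, (Submodule.Quotient.mk_eq_zero W).2 hw,
      map_zero]
  have hker : LinearMap.ker τ ≤ W := by
    refine hess _ (fun w hw => hτW w hw) ?_
    rintro x ⟨hx, hxV⟩
    have : τ x = 0 := hx
    rw [hτ x hxV] at this
    rw [this]; exact W.zero_mem
  have hrange : LinearMap.range τ ≤ V := by
    refine hV.le_of_ge ?_ (fun v hv => ⟨v, hτ v hv⟩)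
    rw [Submodule.disjoint_def]
    rintro _ ⟨y, rfl⟩ hy
    -- X = preimage of W under τ
    refine hτW y (hess (W.comap τ) (fun w hw => ?_) ?_ hy)
    · rw [Submodule.mem_comap, hτW w hw]; exact W.zero_mem
    · rintro x ⟨hx, hxV⟩
      have : τ x ∈ W := hx
      rwa [hτ x hxV] at this
  refine ⟨V, hUV, inj_retract hE V.subtype (τ.codRestrict V fun x => hrange ⟨x, rfl⟩)
    (fun v => Subtype.ext (hτ v v.2)), ?_⟩
  intro x hx hxU
  refine (Submodule.disjoint_def.1 hVW) x hx ?_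
  have : W ⊔ Submodule.span S {x} ≤ W := by
    refine hW.le_of_ge ?_ le_sup_left
    rw [Submodule.disjoint_def]
    intro y hy hyU
    obtain ⟨w, hw, z, hz, rfl⟩ := Submodule.mem_sup.1 hy
    have hzV : z ∈ V := (Submodule.span_le.2 (Set.singleton_subset_iff.2 hx)) hz
    have hwV : w ∈ V := by
      have := V.sub_mem (hUV hyU) hzV
      rwa [add_sub_cancel_right] at this
    have hw0 : w = 0 := (Submodule.disjoint_def.1 hVW) w hwV hw
    subst hw0
    rw [zero_add] at hyU ⊢
    have : z ∈ Submodule.span S {x} ⊓ U := ⟨hz, hyU⟩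
    rw [hxU] at this
    exact this
  exact this (Submodule.mem_sup_right (Submodule.mem_span_singleton_self x))

theorem chain_bound {R : Type u} [Ring R] {n k : ℕ} (h : nwidLE R n k (ModuleCat.of R R))
    (M : ModuleCat.{u} Rᵐᵒᵖ) (hM : IsNKWeakCotorsion R n k M)
    (c : Set (Submodule Rᵐᵒᵖ M)) (hc : ∀ I ∈ c, Module.Injective Rᵐᵒᵖ I)
    (hch : IsChain (· ≤ ·) c) (hne : c.Nonempty) :
    ∃ V : Submodule Rᵐᵒᵖ M, Module.Injective Rᵐᵒᵖ V ∧ sSup c ≤ V := by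
  let E : ModuleCat.{u} Rᵐᵒᵖ := Injective.under M
  have hE : Module.Injective Rᵐᵒᵖ E :=
    (Module.injective_iff_injective_object Rᵐᵒᵖ E).2 (inferInstanceAs (Injective (Injective.under M)))
  let ι : M →ₗ[Rᵐᵒᵖ] E := (Injective.ι M).hom
  have hι : Function.Injective ι := (ModuleCat.mono_iff_injective (Injective.ι M)).1 inferInstance
  let U := (sSup c).map ι
  have hfin : ∀ (m : ℕ) (t : Fin m → E), (∀ i, t i ∈ U) →
      ∃ J ∈ c, ∀ i, t i ∈ J.map ι := by
    intro m
    induction m with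
    | zero =>
      intro t _
      obtain ⟨J, hJ⟩ := hne
      exact ⟨J, hJ, fun i => i.elim0⟩
    | succ m ih =>
      intro t ht
      obtain ⟨J, hJ, hJt⟩ := ih (fun i => t i.succ) (fun i => ht _)
      obtain ⟨x, hx, hx0⟩ := ht 0
      obtain ⟨J', hJ', hxJ'⟩ := (Submodule.mem_sSup_of_directed hne hch.directedOn).1 hx
      obtain ⟨L, hL, hJL, hJ'L⟩ := hch.directedOn J hJ J' hJ'
      refine ⟨L, hL, fun i => ?_⟩
      refine Fin.cases ?_ (fun i => ?_) i
      · exact ⟨x, hJ'L hxJ', hx0⟩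
      · exact Submodule.map_mono hJL (hJt i)
  have hq := nwfd_quot h hE U (by
    intro m t ht
    obtain ⟨J, hJ, hJt⟩ := hfin m t ht
    let e := Submodule.equivMapOfInjective ι hι J
    exact ⟨J.map ι, inj_retract (hc J hJ) e.symm.toLinearMap e.toLinearMap (by simp),
      Submodule.map_mono (le_sSup hJ), hJt⟩)
  let e := Submodule.equivMapOfInjective ι hι (sSup c)
  obtain ⟨g, hg⟩ := ext_hom U M (hM _ hq) ((sSup c).subtype ∘ₗ e.symm.toLinearMap)
  have hg' : ∀ x ∈ sSup c, g (ι x) = x := by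
    intro x hx
    have h1 := hg (e ⟨x, hx⟩)
    simpa [e] using h1
  obtain ⟨V, hUV, hV, hess⟩ := exists_hull hE U
  let γ : V →ₗ[Rᵐᵒᵖ] M := g ∘ₗ V.subtype
  have hγ : Function.Injective γ := by
    rw [injective_iff_map_eq_zero]
    intro v hv
    apply Subtype.ext
    refine hess v v.2 ?_
    rw [eq_bot_iff]
    rintro y ⟨hy, hyU⟩
    obtain ⟨r, rfl⟩ := Submodule.mem_span_singleton.1 hy
    obtain ⟨x, hx, hxe⟩ := hyU
    have hv' : g v = 0 := hv
    have h2 := hg' x hx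
    rw [hxe, map_smul, hv', smul_zero] at h2
    rw [Submodule.mem_bot, ← hxe, ← h2, map_zero]
  let ε := LinearEquiv.ofInjective γ hγ
  refine ⟨LinearMap.range γ, inj_retract hV ε.symm.toLinearMap ε.toLinearMap (by simp), ?_⟩
  intro x hx
  exact ⟨⟨ι x, hUV ⟨x, hx, rfl⟩⟩, hg' x hx⟩

theorem inj_prod {S : Type u} [Ring S] {X Y : Type u} [AddCommGroup X] [Module S X]
    [AddCommGroup Y] [Module S Y] (hX : Module.Injective S X) (hY : Module.Injective S Y) :
    Module.Injective S (X × Y) := by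
  refine ⟨fun A B _ _ _ _ f hf g => ?_⟩
  obtain ⟨t, ht⟩ := hX.out f hf (LinearMap.fst S X Y ∘ₗ g)
  obtain ⟨t', ht'⟩ := hY.out f hf (LinearMap.snd S X Y ∘ₗ g)
  exact ⟨t.prod t', fun x => Prod.ext (ht x) (ht' x)⟩

theorem inj_equiv {S : Type u} [Ring S] {X Y : Type u} [AddCommGroup X] [Module S X]
    [AddCommGroup Y] [Module S Y] (hX : Module.Injective S X) (e : X ≃ₗ[S] Y) :
    Module.Injective S Y :=
  inj_retract hX e.symm.toLinearMap e.toLinearMap (by simp)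

/-- if `n-wid(_R R) ≤ k`, then `M` is `(n,k)`-weak cotorsion iff `M` is
the direct sum of an injective module and a reduced `(n,k)`-weak cotorsion module. -/
theorem stmt11 (R : Type u) [Ring R] (n k : ℕ)
    (h : nwidLE R n k (ModuleCat.of R R)) (M : ModuleCat.{u} Rᵐᵒᵖ) :
    IsNKWeakCotorsion R n k M ↔
      ∃ (E N' : ModuleCat.{u} Rᵐᵒᵖ),
        Module.Injective Rᵐᵒᵖ E ∧ IsReducedModule Rᵐᵒᵖ N' ∧
        IsNKWeakCotorsion R n k N' ∧
        Nonempty ((M : Type u) ≃ₗ[Rᵐᵒᵖ] (E × N')) := by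
  constructor
  · intro hM
    obtain ⟨V, -, hV⟩ := zorn_le_nonempty₀ {I : Submodule Rᵐᵒᵖ M | Module.Injective Rᵐᵒᵖ I} (by
      intro c hc hch y hy
      obtain ⟨V, hV, hle⟩ := chain_bound h M hM c hc hch ⟨y, hy⟩
      exact ⟨V, hV, fun z hz => (le_sSup hz).trans hle⟩) ⊥
      ⟨fun A B _ _ _ _ f _ g => ⟨0, fun x => Subsingleton.elim _ _⟩⟩
    have hVi : Module.Injective Rᵐᵒᵖ V := hV.prop
    obtain ⟨r, hr⟩ := hVi.out V.subtype V.injective_subtype LinearMap.id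
    have hr' : ∀ x : V, r x = x := hr
    have hcompl : IsCompl V (LinearMap.ker r) := LinearMap.isCompl_of_proj hr'
    let e := Submodule.prodEquivOfIsCompl V (LinearMap.ker r) hcompl
    refine ⟨ModuleCat.of _ V, ModuleCat.of _ (LinearMap.ker r), hVi, ?_, ?_, ⟨e.symm⟩⟩
    · intro Q hQ
      let Q' : Submodule Rᵐᵒᵖ M := Submodule.map (LinearMap.ker r).subtype Q
      have hQ'k : Q' ≤ LinearMap.ker r := Submodule.map_subtype_le _ _
      let γ : (V × Q) →ₗ[Rᵐᵒᵖ] M :=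
        V.subtype.coprod ((LinearMap.ker r).subtype ∘ₗ Q.subtype)
      have hγ : Function.Injective γ := by
        rw [injective_iff_map_eq_zero]
        rintro ⟨v, q⟩ hvq
        have h1 : (v : M) + ((q : LinearMap.ker r) : M) = 0 := hvq
        have h2 : r ((q : LinearMap.ker r) : M) = 0 := (q : LinearMap.ker r).2
        have h3 := congrArg r h1
        rw [map_add, h2, add_zero, hr', map_zero] at h3
        subst h3
        rw [Submodule.coe_zero, zero_add] at h1
        exact Prod.ext rfl (Subtype.ext (Subtype.ext h1))
      have hinj : Module.Injective Rᵐᵒᵖ (LinearMap.range γ) :=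
        inj_equiv (inj_prod hVi hQ) (LinearEquiv.ofInjective γ hγ)
      have hle : LinearMap.range γ ≤ V := hV.le_of_ge hinj (by
        intro v hv
        exact ⟨(⟨v, hv⟩, 0), by simp [γ]⟩)
      rw [eq_bot_iff]
      intro q hq
      have hqV : (q : M) ∈ V := hle ⟨(0, ⟨q, hq⟩), by simp [γ]⟩
      have h0 : (q : M) = 0 := (Submodule.disjoint_def.1 hcompl.disjoint) _ hqV q.2
      exact Subtype.ext h0
    · intro A hA
      refine ext_retract 0 (hM A hA) (LinearMap.ker r).subtype
        (LinearMap.snd _ _ _ ∘ₗ e.symm.toLinearMap) ?_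
      intro x
      simp [e]
  · rintro ⟨E, N', hE, -, hN, ⟨e⟩⟩ A hA
    exact ext_prod 0 (ext_inj 0 hE) (hN A hA) e
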